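/- Let G be the free group on generators a_1,…,a_n and let φ : G → G be an endomorphism with remnant such that |Rem_φ a_i| > 1 for every generator a_i. Set l = min_i (|Rem_φ a_i| − 1) > 0. Then for all u, v ∈ G: there exists z ∈ G with v = φ(z)·u·z⁻¹ if and only if there exists z ∈ G with |z| ≤ (|u| + |v|)/l and v = φ(z)·u·z⁻¹. In particular, singly-twisted conjugacy of u and v with respect to φ is decided by checking the finitely many z of length at most (|u| + |v|)/l. -/

import Mathlib

/-!
`cancelLen x y` is the length of the common prefix of the words of `x⁻¹` and `y`, i.e. the Gromov
product of `x⁻¹` and `y` in the Cayley tree, so it satisfies the ultrametric (0-hyperbolic)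
inequality. Hence if `k` and `q` together cancel fewer than `|h|` letters of `h` in `k * h` and
`h * q`, then `k` cancels no more against `h * q` than against `h` alone. Applied along the letters
of a reduced word, this shows that the remnants of the images of the letters survive in `φ z`,
whence `(l + 1) * |z| ≤ |φ z|`. On the other hand `v = φ z * u * z⁻¹` gives
`|φ z| ≤ |u| + |v| + |z|`, so `l * |z| ≤ |u| + |v|`.
-/

/-- Half the total cancellation in the product `x * y` of elements of a free group:
`(|x| + |y| - |x*y|) / 2`. -/
def cancelLen {β : Type} [DecidableEq β] (x y : FreeGroup β) : ℕ :=
  (FreeGroup.norm x + FreeGroup.norm y - FreeGroup.norm (x * y)) / 2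

/-- `x` or `x⁻¹`, according to the sign `b` (`true` = exponent `1`, `false` = exponent `-1`). -/
def pmPow {β : Type} [DecidableEq β] (b : Bool) (x : FreeGroup β) : FreeGroup β :=
  if b then x else x⁻¹

/-- The left cancellation `L_i` of the `i`-th entry of the tuple `t`: the maximum of
`(|h_j^α| + |h_i| - |h_j^α * h_i|)/2` over pairs `(j, α)` with `(j, α) ≠ (i, -1)`. -/
def leftCancel {β : Type} [DecidableEq β] {N : ℕ} (t : Fin N → FreeGroup β) (i : Fin N) : ℕ :=
  Finset.univ.sup fun p : Fin N × Bool =>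
    if p.1 = i ∧ p.2 = false then 0 else cancelLen (pmPow p.2 (t p.1)) (t i)

/-- The right cancellation `R_i` of the `i`-th entry of the tuple `t`: the maximum of
`(|h_i| + |h_k^β| - |h_i * h_k^β|)/2` over pairs `(k, β)` with `(k, β) ≠ (i, -1)`. -/
def rightCancel {β : Type} [DecidableEq β] {N : ℕ} (t : Fin N → FreeGroup β) (i : Fin N) : ℕ :=
  Finset.univ.sup fun p : Fin N × Bool =>
    if p.1 = i ∧ p.2 = false then 0 else cancelLen (t i) (pmPow p.2 (t p.1))

/-- The remnant length `|Rem_t h_i| = |h_i| - L_i - R_i` of the `i`-th entry of `t`. -/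
def remLen {β : Type} [DecidableEq β] {N : ℕ} (t : Fin N → FreeGroup β) (i : Fin N) : ℕ :=
  FreeGroup.norm (t i) - leftCancel t i - rightCancel t i

/-- A tuple has remnant if `|h_i| - L_i - R_i ≥ 1` for all `i`. -/
def HasRemnant {β : Type} [DecidableEq β] {N : ℕ} (t : Fin N → FreeGroup β) : Prop :=
  ∀ i, 1 ≤ remLen t i

/-- The length of the longest common prefix of two lists. Applied to reduced words, it is the Gromov
product of two elements of a free group with respect to `1`. -/
def commonPrefixLength {γ : Type*} [DecidableEq γ] : List γ → List γ → ℕ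
  | a :: s, b :: t => if a = b then commonPrefixLength s t + 1 else 0
  | _, _ => 0

theorem min_commonPrefixLength_le {γ : Type*} [DecidableEq γ] (A B C : List γ) :
    min (commonPrefixLength A B) (commonPrefixLength B C) ≤ commonPrefixLength A C := by
  induction A generalizing B C with
  | nil => simp [commonPrefixLength]
  | cons a A ih =>
    cases B <;> cases C <;> simp only [commonPrefixLength] <;> grind

section CancelLen

open FreeGroup

variable {α : Type*}

theorem isReduced_invRev {A : List (α × Bool)} (hA : IsReduced A) :
    IsReduced (invRev A) := by
  classical
  rw [isReduced_iff_reduce_eq, reduce_invRev, hA.reduce_eq]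

theorem isReduced_invRev_append {A B : List (α × Bool)} (hA : IsReduced A) (hB : IsReduced B)
    (hAB : ∀ a ∈ A.head?, a ∉ B.head?) : IsReduced (invRev A ++ B) := by
  refine List.isChain_append.2 ⟨isReduced_invRev hA, hB, fun x hx b hb hxb => ?_⟩
  obtain ⟨a, ha, rfl⟩ : ∃ a ∈ A.head?, (a.1, !a.2) = x := by simpa [invRev] using hx
  have hab : a ≠ b := fun h => hAB a ha (h ▸ hb)
  grind

variable [DecidableEq α]

theorem norm_mk_of_isReduced {A : List (α × Bool)} (hA : IsReduced A) :
    (mk A).norm = A.length := by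
  rw [FreeGroup.norm, toWord_mk, hA.reduce_eq]

theorem norm_mk_inv_mul_mk_of_disjoint_head {A B : List (α × Bool)} (hA : IsReduced A)
    (hB : IsReduced B) (hAB : ∀ a ∈ A.head?, a ∉ B.head?) :
    ((mk A)⁻¹ * mk B).norm = A.length + B.length := by
  rw [inv_mk, mul_mk, norm_mk_of_isReduced (isReduced_invRev_append hA hB hAB),
    List.length_append, invRev_length]

theorem norm_mk_inv_mul_mk_add_two_mul_commonPrefixLength {A B : List (α × Bool)}
    (hA : IsReduced A) (hB : IsReduced B) :
    ((mk A)⁻¹ * mk B).norm + 2 * commonPrefixLength A B = A.length + B.length := by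
  fun_induction commonPrefixLength A B with
  | case1 A a B ih =>
    have cancel_head : (mk (a :: A))⁻¹ * mk (a :: B) = (mk A)⁻¹ * mk B := by
      have mk_cons (C) : mk (a :: C) = mk [a] * mk C := by rw [mul_mk, List.singleton_append]
      rw [mk_cons A, mk_cons B]
      group
    have := ih hA.tail hB.tail
    rw [cancel_head, List.length_cons, List.length_cons]
    omega
  | case2 a A b B hab =>
    exact norm_mk_inv_mul_mk_of_disjoint_head hA hB (by simpa using Ne.symm hab)
  | case3 A B h =>
    refine norm_mk_inv_mul_mk_of_disjoint_head hA hB fun a ha hb => ?_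
    obtain ⟨s, rfl⟩ := List.head?_eq_some_iff.1 ha
    obtain ⟨t, rfl⟩ := List.head?_eq_some_iff.1 hb
    exact h a s a t rfl rfl

theorem norm_inv_mul_add_two_mul_commonPrefixLength (x y : FreeGroup α) :
    (x⁻¹ * y).norm + 2 * commonPrefixLength x.toWord y.toWord = x.norm + y.norm := by
  simpa only [mk_toWord, FreeGroup.norm] using
    norm_mk_inv_mul_mk_add_two_mul_commonPrefixLength (isReduced_toWord (x := x))
      (isReduced_toWord (x := y))

theorem norm_le_of_eq_mul_mul_inv {u v w z : FreeGroup α} (h : v = w * u * z⁻¹) :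
    w.norm ≤ u.norm + v.norm + z.norm := by
  calc w.norm = (v * z * u⁻¹).norm := by rw [h]; group
    _ ≤ (v * z).norm + u⁻¹.norm := FreeGroup.norm_mul_le _ _
    _ ≤ v.norm + z.norm + u⁻¹.norm := by gcongr; exact FreeGroup.norm_mul_le v z
    _ = u.norm + v.norm + z.norm := by rw [norm_inv_eq]; ring

variable {β : Type} [DecidableEq β]

theorem cancelLen_eq_commonPrefixLength (x y : FreeGroup β) :
    cancelLen x y = commonPrefixLength x⁻¹.toWord y.toWord := by
  have := norm_inv_mul_add_two_mul_commonPrefixLength x⁻¹ y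
  rw [inv_inv, norm_inv_eq] at this
  rw [cancelLen]
  omega

theorem norm_mul_add_two_mul_cancelLen (x y : FreeGroup β) :
    (x * y).norm + 2 * cancelLen x y = x.norm + y.norm := by
  simpa only [inv_inv, norm_inv_eq, ← cancelLen_eq_commonPrefixLength] using
    norm_inv_mul_add_two_mul_commonPrefixLength x⁻¹ y

theorem cancelLen_inv_inv (x y : FreeGroup β) : cancelLen x⁻¹ y⁻¹ = cancelLen y x := by
  rw [cancelLen, cancelLen, ← mul_inv_rev, norm_inv_eq, norm_inv_eq, norm_inv_eq, add_comm]

theorem min_cancelLen_le (x y z : FreeGroup β) :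
    min (cancelLen x y) (cancelLen y⁻¹ z) ≤ cancelLen x z := by
  simpa only [cancelLen_eq_commonPrefixLength, inv_inv] using
    min_commonPrefixLength_le x⁻¹.toWord y.toWord z.toWord

theorem cancelLen_mul_right_le {k h q : FreeGroup β}
    (hlt : cancelLen k h + cancelLen h q < h.norm) : cancelLen k (h * q) ≤ cancelLen k h := by
  have surviving_prefix : cancelLen (h * q)⁻¹ h + cancelLen h q = h.norm := by
    have hq := norm_mul_add_two_mul_cancelLen h q
    have hqh := norm_mul_add_two_mul_cancelLen (h * q)⁻¹ h
    rw [show (h * q)⁻¹ * h = q⁻¹ by group, norm_inv_eq, norm_inv_eq] at hqh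
    omega
  have ultrametric := min_cancelLen_le k (h * q) h
  omega

section Product

variable {ι : Type*} {h : ι → FreeGroup β} {L R : ι → ℕ}

theorem cancelLen_prod_map_le (hLR : ∀ i, L i + R i < (h i).norm) {i : ι} {w : List ι}
    (hw : (i :: w).IsChain fun j k => cancelLen (h j) (h k) ≤ min (R j) (L k))
    {g : FreeGroup β} (hg : cancelLen g (h i) ≤ L i) :
    cancelLen g ((i :: w).map h).prod ≤ cancelLen g (h i) := by
  induction w generalizing i g with
  | nil => simp
  | cons k w ih =>
    rw [List.isChain_cons_cons, le_min_iff] at hw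
    obtain ⟨⟨hR, hL⟩, hw⟩ := hw
    have cancel_right := (ih hw hL).trans hR
    rw [List.map_cons, List.prod_cons]
    exact cancelLen_mul_right_le ((add_le_add hg cancel_right).trans_lt (hLR i))

theorem mul_length_add_le_norm_prod_map {m : ℕ} (hm : 0 < m)
    (hLR : ∀ i, m + L i + R i ≤ (h i).norm) {i : ι} {w : List ι}
    (hw : (i :: w).IsChain fun j k => cancelLen (h j) (h k) ≤ min (R j) (L k)) :
    m * (i :: w).length + L i ≤ ((i :: w).map h).prod.norm := by
  induction w generalizing i with
  | nil =>
    have := hLR i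
    simp only [List.length_singleton, List.map_singleton, List.prod_singleton]
    omega
  | cons k w ih =>
    rw [List.isChain_cons_cons, le_min_iff] at hw
    obtain ⟨⟨hR, hL⟩, hw⟩ := hw
    have cancel_le := cancelLen_prod_map_le (fun j => by have := hLR j; omega) hw hL
    have norm_mul := norm_mul_add_two_mul_cancelLen (h i) ((k :: w).map h).prod
    have := ih hw
    have := hLR i
    rw [List.map_cons, List.prod_cons, List.length_cons, mul_add_one]
    omega

end Product

section Remnant

variable {N : ℕ} (t : Fin N → FreeGroup β)

/-- The entry `h_i` or its inverse, according to the letter `p = (i, ±1)`; this is the image of the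
letter `p` under the homomorphism `a_i ↦ h_i`. -/
def signedEntry (p : Fin N × Bool) : FreeGroup β :=
  pmPow p.2 (t p.1)

/-- The left cancellation of `signedEntry t p`: inversion exchanges the two ends of a word, so it is
`L_i` for the letter `(i, 1)` and `R_i` for the letter `(i, -1)`. -/
def signedLeftCancel (p : Fin N × Bool) : ℕ :=
  if p.2 then leftCancel t p.1 else rightCancel t p.1

/-- The right cancellation of `signedEntry t p`: `R_i` for the letter `(i, 1)` and `L_i` for the
letter `(i, -1)`. -/
def signedRightCancel (p : Fin N × Bool) : ℕ :=
  if p.2 then rightCancel t p.1 else leftCancel t p.1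

theorem lift_mk_eq_prod_signedEntry (w : List (Fin N × Bool)) :
    lift t (mk w) = (w.map (signedEntry t)).prod := by
  simp only [lift_mk, Bool.cond_eq_ite]
  rfl

theorem inv_signedEntry (p : Fin N × Bool) :
    (signedEntry t p)⁻¹ = signedEntry t (p.1, !p.2) := by
  obtain ⟨i, _ | _⟩ := p <;> simp [signedEntry, pmPow]

theorem cancelLen_signedEntry_le_leftCancel {p : Fin N × Bool} {i : Fin N}
    (hp : ¬(p.1 = i ∧ p.2 = false)) :
    cancelLen (signedEntry t p) (t i) ≤ leftCancel t i := by
  simpa only [if_neg hp] using! Finset.le_sup (f := fun p : Fin N × Bool =>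
    if p.1 = i ∧ p.2 = false then 0 else cancelLen (signedEntry t p) (t i)) (Finset.mem_univ p)

theorem cancelLen_signedEntry_le_rightCancel {p : Fin N × Bool} {i : Fin N}
    (hp : ¬(p.1 = i ∧ p.2 = false)) :
    cancelLen (t i) (signedEntry t p) ≤ rightCancel t i := by
  simpa only [if_neg hp] using! Finset.le_sup (f := fun p : Fin N × Bool =>
    if p.1 = i ∧ p.2 = false then 0 else cancelLen (t i) (signedEntry t p)) (Finset.mem_univ p)

variable {t}

theorem cancelLen_signedEntry_le_signedLeftCancel {p q : Fin N × Bool}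
    (hpq : p.1 = q.1 → p.2 = q.2) :
    cancelLen (signedEntry t p) (signedEntry t q) ≤ signedLeftCancel t q := by
  obtain ⟨j, _ | _⟩ := q
  · rw [← cancelLen_inv_inv, inv_signedEntry, inv_signedEntry]
    exact cancelLen_signedEntry_le_rightCancel t (by simpa using hpq)
  · exact cancelLen_signedEntry_le_leftCancel t (by simpa using hpq)

theorem cancelLen_signedEntry_le_signedRightCancel {p q : Fin N × Bool}
    (hpq : p.1 = q.1 → p.2 = q.2) :
    cancelLen (signedEntry t p) (signedEntry t q) ≤ signedRightCancel t p := by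
  have hqp : (q.1, !q.2).1 = (p.1, !p.2).1 → (q.1, !q.2).2 = (p.1, !p.2).2 :=
    fun h => congrArg not (hpq h.symm).symm
  have := cancelLen_signedEntry_le_signedLeftCancel (t := t) hqp
  rw [← inv_signedEntry, ← inv_signedEntry, cancelLen_inv_inv] at this
  obtain ⟨i, _ | _⟩ := p <;> exact this

theorem remLen_add_signedCancel {p : Fin N × Bool} (hp : 0 < remLen t p.1) :
    remLen t p.1 + signedLeftCancel t p + signedRightCancel t p = (signedEntry t p).norm := by
  obtain ⟨i, _ | _⟩ := p <;>
    simp only [remLen, signedLeftCancel, signedRightCancel, signedEntry, pmPow, norm_inv_eq,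
      if_true, Bool.false_eq_true, if_false] at hp ⊢ <;>
    omega

theorem isChain_cancelLen_signedEntry {w : List (Fin N × Bool)} (hw : IsReduced w) :
    w.IsChain fun p q => cancelLen (signedEntry t p) (signedEntry t q) ≤
      min (signedRightCancel t p) (signedLeftCancel t q) :=
  hw.imp fun _ _ hpq =>
    le_min (cancelLen_signedEntry_le_signedRightCancel hpq)
      (cancelLen_signedEntry_le_signedLeftCancel hpq)

theorem mul_norm_le_norm_lift {m : ℕ} (hm : ∀ i, m ≤ remLen t i) (z : FreeGroup (Fin N)) :
    m * z.norm ≤ (lift t z).norm := by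
  obtain rfl | hpos := m.eq_zero_or_pos
  · simp
  have hLR (p : Fin N × Bool) :
      m + signedLeftCancel t p + signedRightCancel t p ≤ (signedEntry t p).norm := by
    rw [← remLen_add_signedCancel (hpos.trans_le (hm p.1))]
    gcongr
    exact hm p.1
  have hchain := isChain_cancelLen_signedEntry (t := t) (isReduced_toWord (x := z))
  rw [← mk_toWord (x := z), lift_mk_eq_prod_signedEntry, mk_toWord, FreeGroup.norm]
  cases hz : z.toWord with
  | nil => simp
  | cons p w =>
    rw [hz] at hchain
    exact (Nat.le_add_right _ _).trans (mul_length_add_le_norm_prod_map hpos hLR hchain)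

end Remnant

end CancelLen

/-- Let `φ` be an endomorphism of the free group on `n` generators
with remnant such that `|Rem_φ a_i| > 1` for every generator, and set
`l = min_i (|Rem_φ a_i| - 1)`. Then `u` and `v` are singly-twisted conjugate, i.e.
`∃ z, v = φ(z) * u * z⁻¹`, if and only if such a `z` exists with
`|z| ≤ (|u| + |v|) / l`; so singly-twisted conjugacy is decided by finitely many checks. -/
theorem singly_twisted_decision {n : ℕ} (hn : 0 < n)
    (φ : FreeGroup (Fin n) →* FreeGroup (Fin n))
    (hrem : HasRemnant fun i : Fin n => φ (FreeGroup.of i))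
    (hgt : ∀ i : Fin n, 1 < remLen (fun j : Fin n => φ (FreeGroup.of j)) i)
    (l : ℕ)
    (hl : l = Finset.univ.inf'
      (⟨⟨0, hn⟩, Finset.mem_univ _⟩ : (Finset.univ : Finset (Fin n)).Nonempty)
      (fun i => remLen (fun j : Fin n => φ (FreeGroup.of j)) i - 1))
    (u v : FreeGroup (Fin n)) :
    (∃ z : FreeGroup (Fin n), v = φ z * u * z⁻¹) ↔
      ∃ z : FreeGroup (Fin n),
        (FreeGroup.norm z : ℝ) ≤ (FreeGroup.norm u + FreeGroup.norm v) / l ∧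
        v = φ z * u * z⁻¹ := by
  refine ⟨fun ⟨z, hz⟩ => ⟨z, ?_, hz⟩, fun ⟨z, _, hz⟩ => ⟨z, hz⟩⟩
  have hl_pos : 0 < l := by
    rw [hl]
    exact (Finset.lt_inf'_iff _).2 fun i _ => Nat.sub_pos_of_lt (hgt i)
  have hl_rem (i : Fin n) : l + 1 ≤ remLen (fun j : Fin n => φ (FreeGroup.of j)) i := by
    have : l ≤ remLen (fun j : Fin n => φ (FreeGroup.of j)) i - 1 :=
      hl ▸ Finset.inf'_le _ (Finset.mem_univ i)
    exact Nat.add_le_of_le_sub (hgt i).le this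
  have hlower : (l + 1) * z.norm ≤ (φ z).norm := by
    rw [FreeGroup.lift_unique φ (fun _ => rfl)]
    exact mul_norm_le_norm_lift hl_rem z
  have hupper : (φ z).norm ≤ u.norm + v.norm + z.norm := norm_le_of_eq_mul_mul_inv hz
  have hz_mul : z.norm * l ≤ u.norm + v.norm := by linarith
  rw [le_div_iff₀ (by exact_mod_cast hl_pos)]
  exact_mod_cast hz_mul
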